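/- arXiv:1410.1468 — 6 statements merged into one kernel-verified Lean document; each statement's English description precedes it below -/
import Mathlib

section
/- Let C ≥ 0 and let f : ℝ → ℝ satisfy |f(s)| ≤ C/cosh(s) for all s ∈ ℝ. If I ⊆ ℝ is an interval, t₀ ∈ I, and u : I → ℝ is twice differentiable with u''(t) = f(u(t)) for all t ∈ I, then u'(t)² ≤ u'(t₀)² + 2Cπ for all t ∈ I. -/
/-!
Since `f` is not assumed continuous, it need not have a potential, so energy conservation is replaced
by comparison with the primitive `arctan ∘ sinh` of `1 / cosh`, whose total variation is `π`. As long
as `u'` keeps a constant sign, `(u' ^ 2)' = 2 u' f(u)` is bounded in absolute value by the derivative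
of `± 2 C arctan (sinh u)`, so `u' ^ 2` changes by at most `2 C π` (`energy_of_nonneg`). In general,
if `u' t ≠ 0`, the comparison starts at the zero of `u'` between `t₀` and `t` nearest to `t`, or at
`t₀` if there is none (`bound_of_pos`): at a zero the starting energy is `0 ≤ u'(t₀) ^ 2`. Negative
velocities reduce to positive ones by the symmetry `u ↦ -u`, `f ↦ -f(-·)`.
-/

set_option linter.unusedVariables false

noncomputable section

/-- Partial derivative with respect to the first variable. -/
def px (f : ℝ → ℝ → ℝ) : ℝ → ℝ → ℝ := fun x y => deriv (fun s => f s y) x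

/-- Partial derivative with respect to the second variable. -/
def py (f : ℝ → ℝ → ℝ) : ℝ → ℝ → ℝ := fun x y => deriv (fun s => f x s) y

/-- Smoothness on a subset of the plane, for a curried function of two real variables. -/
def SmoothOn2 (f : ℝ → ℝ → ℝ) (U : Set (ℝ × ℝ)) : Prop :=
  ContDiffOn ℝ (⊤ : ℕ∞) (Function.uncurry f) U

/-- Smoothness on the whole plane, for a curried function of two real variables. -/
def Smooth2 (f : ℝ → ℝ → ℝ) : Prop :=
  ContDiff ℝ (⊤ : ℕ∞) (Function.uncurry f)

/-- First component ρ₁ of the curvature one-form ρ = ρ₁dx + ρ₂dy of the symplectic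
connection ∇ = ∂ + Π determined by the functions A, B, C, D in Darboux coordinates. -/
def rho1 (A B C D : ℝ → ℝ → ℝ) : ℝ → ℝ → ℝ := fun x y =>
  (-2) * ((-2) * py (px A) x y - py (py B) x y - px (px D) x y
    + px (fun x' y' => A x' y' * D x' y' - B x' y' * C x' y') x y
    + 3 * py (fun x' y' => A x' y' ^ 2 - B x' y' * D x' y') x y
    + 2 * A x y * px D x y - D x y * px A x y - B x y * px C x y)

/-- Second component ρ₂ of the curvature one-form. -/
def rho2 (A B C D : ℝ → ℝ → ℝ) : ℝ → ℝ → ℝ := fun x y =>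
  (-2) * (2 * py (px D) x y + py (py A) x y + px (px C) x y
    + 3 * px (fun x' y' => A x' y' * C x' y' - D x' y' ^ 2) x y
    - py (fun x' y' => A x' y' * D x' y' - B x' y' * C x' y') x y
    - 2 * D x y * py A x y + A x y * py D x y + C x y * py B x y)

/-- The Cahen–Gutt moment map K(∇) of the symplectic connection ∇ = ∂ + Π. -/
def Kmap (A B C D : ℝ → ℝ → ℝ) : ℝ → ℝ → ℝ := fun x y =>
  3 * py (py (px A)) x y + 3 * py (px (px D)) x y
    + py (py (py B)) x y + px (px (px C)) x y
    - px B x y * py C x y + py B x y * px C x y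
    + 3 * (px A x y * py D x y - py A x y * px D x y)
    + 3 * px (px (fun x' y' => A x' y' * C x' y' - D x' y' ^ 2)) x y
    + 3 * py (py (fun x' y' => B x' y' * D x' y' - A x' y' ^ 2)) x y
    - 3 * py (px (fun x' y' => A x' y' * D x' y' - B x' y' * C x' y')) x y

/-- First component of −H(k), the dx⊗dx⊗dx component of the criticality operator. -/
def E1 (A B C D k : ℝ → ℝ → ℝ) : ℝ → ℝ → ℝ := fun x y =>
  px (px (px k)) x y - 3 * A x y * px (px k) x y - 3 * B x y * py (px k) x y
    + px k x y * py B x y - px B x y * py k x y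

/-- The dy⊗dy⊗dy component of the criticality operator. -/
def E2 (A B C D k : ℝ → ℝ → ℝ) : ℝ → ℝ → ℝ := fun x y =>
  py (py (py k)) x y - 3 * D x y * py (py k) x y - 3 * C x y * py (px k) x y
    + py k x y * px C x y - py C x y * px k x y

/-- The dx⊙dx⊙dy component of the criticality operator. -/
def E3 (A B C D k : ℝ → ℝ → ℝ) : ℝ → ℝ → ℝ := fun x y =>
  py (px (px k)) x y + 2 * D x y * px (px k) x y - B x y * py (py k) x y
    + A x y * py (px k) x y + px A x y * py k x y - py A x y * px k x y

/-- The dx⊙dy⊙dy component of the criticality operator. -/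
def E4 (A B C D k : ℝ → ℝ → ℝ) : ℝ → ℝ → ℝ := fun x y =>
  py (py (px k)) x y + 2 * A x y * py (py k) x y - C x y * px (px k) x y
    + D x y * py (px k) x y + py D x y * px k x y - px D x y * py k x y

/-- ∇ = ∂ + Π is critical symplectic on U: the four components of H(K(∇)) vanish on U. -/
def Critical (A B C D : ℝ → ℝ → ℝ) (U : Set (ℝ × ℝ)) : Prop :=
  ∀ p ∈ U, E1 A B C D (Kmap A B C D) p.1 p.2 = 0 ∧
    E2 A B C D (Kmap A B C D) p.1 p.2 = 0 ∧
    E3 A B C D (Kmap A B C D) p.1 p.2 = 0 ∧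
    E4 A B C D (Kmap A B C D) p.1 p.2 = 0

/-- Ricci component R₁₁. -/
def R11 (A B C D : ℝ → ℝ → ℝ) : ℝ → ℝ → ℝ := fun x y =>
  px A x y + py B x y + 2 * (B x y * D x y - A x y ^ 2)

/-- Ricci component R₂₂. -/
def R22 (A B C D : ℝ → ℝ → ℝ) : ℝ → ℝ → ℝ := fun x y =>
  px C x y + py D x y + 2 * (A x y * C x y - D x y ^ 2)

/-- Ricci component R₁₂ = R₂₁. -/
def R12 (A B C D : ℝ → ℝ → ℝ) : ℝ → ℝ → ℝ := fun x y =>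
  - py A x y - px D x y + A x y * D x y - B x y * C x y

/-- (∇_x Ric)_{xx}, using Γ^x_{xx}=A, Γ^y_{xx}=B, Γ^x_{xy}=−D, Γ^y_{xy}=−A, Γ^x_{yy}=C, Γ^y_{yy}=D. -/
def nxRxx (A B C D : ℝ → ℝ → ℝ) : ℝ → ℝ → ℝ := fun x y =>
  px (R11 A B C D) x y
    - 2 * (A x y * R11 A B C D x y + B x y * R12 A B C D x y)

/-- (∇_y Ric)_{xx}. -/
def nyRxx (A B C D : ℝ → ℝ → ℝ) : ℝ → ℝ → ℝ := fun x y =>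
  py (R11 A B C D) x y
    - 2 * ((-(D x y)) * R11 A B C D x y + (-(A x y)) * R12 A B C D x y)

/-- (∇_x Ric)_{xy}. -/
def nxRxy (A B C D : ℝ → ℝ → ℝ) : ℝ → ℝ → ℝ := fun x y =>
  px (R12 A B C D) x y
    - (A x y * R12 A B C D x y + B x y * R22 A B C D x y)
    - ((-(D x y)) * R11 A B C D x y + (-(A x y)) * R12 A B C D x y)

/-- (∇_y Ric)_{xy}. -/
def nyRxy (A B C D : ℝ → ℝ → ℝ) : ℝ → ℝ → ℝ := fun x y =>
  py (R12 A B C D) x y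
    - ((-(D x y)) * R12 A B C D x y + (-(A x y)) * R22 A B C D x y)
    - (C x y * R11 A B C D x y + D x y * R12 A B C D x y)

/-- (∇_x Ric)_{yy}. -/
def nxRyy (A B C D : ℝ → ℝ → ℝ) : ℝ → ℝ → ℝ := fun x y =>
  px (R22 A B C D) x y
    - 2 * ((-(D x y)) * R12 A B C D x y + (-(A x y)) * R22 A B C D x y)

/-- (∇_y Ric)_{yy}. -/
def nyRyy (A B C D : ℝ → ℝ → ℝ) : ℝ → ℝ → ℝ := fun x y =>
  py (R22 A B C D) x y
    - 2 * (C x y * R12 A B C D x y + D x y * R22 A B C D x y)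

/-- ∇ = ∂ + Π is preferred on U: the symmetrized covariant derivative of Ric vanishes on U. -/
def Preferred (A B C D : ℝ → ℝ → ℝ) (U : Set (ℝ × ℝ)) : Prop :=
  ∀ p ∈ U, nxRxx A B C D p.1 p.2 = 0 ∧
    2 * nxRxy A B C D p.1 p.2 + nyRxx A B C D p.1 p.2 = 0 ∧
    2 * nyRxy A B C D p.1 p.2 + nxRyy A B C D p.1 p.2 = 0 ∧
    nyRyy A B C D p.1 p.2 = 0

/-- Energy estimate on an interval where the velocity is nonnegative. There `arctan ∘ sinh ∘ u` has
derivative `u' / cosh u ≥ 0`, so adding `± 2 C arctan (sinh u)` to `u' ^ 2` gives monotone functions,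
and `arctan` has oscillation at most `π`. -/
theorem energy_of_nonneg (C : ℝ) (hC : 0 ≤ C) (f : ℝ → ℝ)
    (hf : ∀ s : ℝ, |f s| ≤ C / Real.cosh s) (u u' : ℝ → ℝ) (a b : ℝ) (hab : a ≤ b)
    (hu : ∀ t ∈ Set.Icc a b, HasDerivWithinAt u (u' t) (Set.Icc a b) t)
    (hu' : ∀ t ∈ Set.Icc a b, HasDerivWithinAt u' (f (u t)) (Set.Icc a b) t)
    (hpos : ∀ t ∈ Set.Icc a b, 0 ≤ u' t) :
    |u' b ^ 2 - u' a ^ 2| ≤ 2 * C * Real.pi := by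
  have hG : ∀ t ∈ Set.Icc a b, HasDerivWithinAt (fun t => 2 * C * Real.arctan (Real.sinh (u t)))
      (2 * u' t * (C / Real.cosh (u t))) (Set.Icc a b) t := by
    intro t ht
    have h := (((hu t ht).sinh).arctan).const_mul (2 * C)
    refine h.congr_deriv ?_
    have hc := Real.cosh_pos (u t)
    have hs : 1 + Real.sinh (u t) ^ 2 = Real.cosh (u t) ^ 2 := by
      rw [Real.cosh_sq]; ring
    rw [hs]
    field_simp
  have hE : ∀ t ∈ Set.Icc a b, HasDerivWithinAt (fun t => u' t ^ 2)
      (2 * u' t * f (u t)) (Set.Icc a b) t := by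
    intro t ht
    refine ((hu' t ht).pow 2).congr_deriv ?_
    norm_num
  have hanti : AntitoneOn
      (fun t => u' t ^ 2 - 2 * C * Real.arctan (Real.sinh (u t))) (Set.Icc a b) := by
    have hd := fun t ht => (hE t ht).sub (hG t ht)
    refine antitoneOn_of_hasDerivWithinAt_nonpos (convex_Icc a b)
      (fun t ht => (hd t ht).continuousWithinAt)
      (fun t ht => (hd t (interior_subset ht)).mono interior_subset) ?_
    intro t ht
    have h1 := hpos t (interior_subset ht)
    have h2 := (abs_le.1 (hf (u t))).2
    nlinarith [mul_nonneg h1 (sub_nonneg.2 h2)]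
  have hmono : MonotoneOn
      (fun t => u' t ^ 2 + 2 * C * Real.arctan (Real.sinh (u t))) (Set.Icc a b) := by
    have hd := fun t ht => (hE t ht).add (hG t ht)
    refine monotoneOn_of_hasDerivWithinAt_nonneg (convex_Icc a b)
      (fun t ht => (hd t ht).continuousWithinAt)
      (fun t ht => (hd t (interior_subset ht)).mono interior_subset) ?_
    intro t ht
    have h1 := hpos t (interior_subset ht)
    have h2 := (abs_le.1 (hf (u t))).1
    nlinarith [mul_nonneg h1 (sub_nonneg.2 h2)]
  have h1 := hanti (Set.left_mem_Icc.2 hab) (Set.right_mem_Icc.2 hab) hab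
  have h2 := hmono (Set.left_mem_Icc.2 hab) (Set.right_mem_Icc.2 hab) hab
  have hosc : C * (Real.arctan (Real.sinh (u b)) - Real.arctan (Real.sinh (u a)))
      ≤ C * Real.pi := by
    refine mul_le_mul_of_nonneg_left ?_ hC
    linarith [Real.arctan_lt_pi_div_two (Real.sinh (u b)),
      Real.neg_pi_div_two_lt_arctan (Real.sinh (u a))]
  simp only at h1 h2
  rw [abs_le]
  constructor <;> linarith

/-- The velocity bound at a time of positive velocity. The estimate is run from the point `s` nearest
to `t` at which either the velocity vanishes or `s = t₀`; the velocity keeps its sign in between. -/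
theorem bound_of_pos (C : ℝ) (hC : 0 ≤ C) (f : ℝ → ℝ)
    (hf : ∀ s : ℝ, |f s| ≤ C / Real.cosh s)
    (I : Set ℝ) (hI : I.OrdConnected) (t₀ : ℝ) (ht₀ : t₀ ∈ I)
    (u u' : ℝ → ℝ)
    (hu : ∀ t ∈ I, HasDerivWithinAt u (u' t) I t)
    (hu' : ∀ t ∈ I, HasDerivWithinAt u' (f (u t)) I t) (t : ℝ) (ht : t ∈ I) (hpos : 0 < u' t) :
    (u' t) ^ 2 ≤ (u' t₀) ^ 2 + 2 * C * Real.pi := by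
  have hcont : ContinuousOn u' I := fun x hx => (hu' x hx).continuousWithinAt
  have hJ : Set.uIcc t₀ t ⊆ I := hI.uIcc_subset ht₀ ht
  have hZ : IsCompact (Set.uIcc t₀ t ∩ u' ⁻¹' {0}) :=
    isCompact_uIcc.of_isClosed_subset
      ((hcont.mono hJ).preimage_isClosed_of_isClosed isClosed_Icc isClosed_singleton)
      Set.inter_subset_left
  obtain ⟨s, hsK, hmin⟩ := (hZ.insert t₀).exists_isMinOn (Set.insert_nonempty _ _)
    (f := fun x => |x - t|) (by fun_prop)
  have hsJ : s ∈ Set.uIcc t₀ t := by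
    rcases hsK with rfl | h
    · exact Set.left_mem_uIcc
    · exact h.1
  have hsub : Set.uIcc s t ⊆ Set.uIcc t₀ t := Set.uIcc_subset_uIcc hsJ Set.right_mem_uIcc
  have hsign : ∀ x ∈ Set.uIcc s t, 0 ≤ u' x := by
    intro x hx
    by_contra! hneg
    have hxt : Set.uIcc x t ⊆ Set.uIcc t₀ t :=
      Set.uIcc_subset_uIcc (hsub hx) Set.right_mem_uIcc
    obtain ⟨y, hy, hy0⟩ := intermediate_value_uIcc (hcont.mono (hxt.trans hJ))
      (Set.mem_uIcc.2 (Or.inl ⟨hneg.le, hpos.le⟩))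
    -- A zero `y` strictly between `x` and `t` would be closer to `t` than `s` is.
    have h1 : |s - t| ≤ |y - t| := hmin (Set.mem_insert_of_mem _ ⟨hxt hy, hy0⟩)
    have hyx : y ≠ x := by
      rintro rfl
      exact hneg.ne hy0
    have h2 : |y - t| < |x - t| := by
      rcases Set.mem_uIcc.1 hy with ⟨h, h'⟩ | ⟨h, h'⟩
      · have := lt_of_le_of_ne h hyx.symm
        rw [abs_of_nonpos, abs_of_nonpos] <;> linarith
      · have := lt_of_le_of_ne h' hyx
        rw [abs_of_nonneg, abs_of_nonneg] <;> linarith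
    have h3 : |x - t| ≤ |s - t| := by
      rw [abs_sub_comm x t, abs_sub_comm s t]
      exact Set.abs_sub_right_of_mem_uIcc hx
    linarith
  have key : |u' t ^ 2 - u' s ^ 2| ≤ 2 * C * Real.pi := by
    rcases le_total s t with hst | hst
    · rw [Set.uIcc_of_le hst] at hsign hsub
      exact energy_of_nonneg C hC f hf u u' s t hst
        (fun x hx => (hu x (hJ (hsub hx))).mono (hsub.trans hJ))
        (fun x hx => (hu' x (hJ (hsub hx))).mono (hsub.trans hJ)) hsign
    · rw [Set.uIcc_of_ge hst] at hsign hsub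
      rw [abs_sub_comm]
      exact energy_of_nonneg C hC f hf u u' t s hst
        (fun x hx => (hu x (hJ (hsub hx))).mono (hsub.trans hJ))
        (fun x hx => (hu' x (hJ (hsub hx))).mono (hsub.trans hJ)) hsign
  have hs : u' s ^ 2 ≤ u' t₀ ^ 2 := by
    rcases hsK with rfl | h
    · exact le_rfl
    · have h0 : u' s = 0 := h.2
      rw [h0, zero_pow two_ne_zero]
      positivity
  linarith [(abs_le.1 key).2]

/-- a priori velocity bound for ü = f(u) when |f(s)| ≤ C/cosh(s):
along any solution on an interval I, u'(t)² ≤ u'(t₀)² + 2Cπ. -/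
theorem stmt8 (C : ℝ) (hC : 0 ≤ C) (f : ℝ → ℝ)
    (hf : ∀ s : ℝ, |f s| ≤ C / Real.cosh s)
    (I : Set ℝ) (hI : I.OrdConnected) (t₀ : ℝ) (ht₀ : t₀ ∈ I)
    (u u' : ℝ → ℝ)
    (hu : ∀ t ∈ I, HasDerivWithinAt u (u' t) I t)
    (hu' : ∀ t ∈ I, HasDerivWithinAt u' (f (u t)) I t) :
    ∀ t ∈ I, (u' t) ^ 2 ≤ (u' t₀) ^ 2 + 2 * C * Real.pi := by
  intro t ht
  rcases lt_trichotomy (u' t) 0 with h | h | h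
  · have := bound_of_pos C hC (fun s => -f (-s))
      (fun s => by simpa using hf (-s)) I hI t₀ ht₀ (fun x => -u x) (fun x => -u' x)
      (fun x hx => (hu x hx).neg) (fun x hx => (hu' x hx).neg.congr_deriv (by simp)) t ht
      (by simpa using h)
    simpa using this
  · rw [h, zero_pow two_ne_zero]
    have := Real.pi_pos
    positivity
  · exact bound_of_pos C hC f hf I hI t₀ ht₀ u u' hu hu' t ht h
end
end

section
/- Let C ≥ 0 and let f : ℝ → ℝ be continuously differentiable with |f(s)| ≤ C/cosh(s) for all s ∈ ℝ. Then for every (t₀, u₀, v₀) ∈ ℝ³ there exists a twice continuously differentiable function u : ℝ → ℝ with u(t₀) = u₀, u'(t₀) = v₀, and u''(t) = f(u(t)) for all t ∈ ℝ; that is, all maximal solutions of ü = f(u) are defined on all of ℝ. -/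
/-!
The equation `ü = f(u)` is the flow of the planar vector field `(u, v) ↦ (v, f u)`. The bound
`|f| ≤ C / cosh` gives `|f| ≤ C`, so the field grows at most linearly. On the closed ball of radius
`a = |v₀| + C + 1` about `(u₀, v₀)` (sup norm) its norm is at most `|v₀| + a + C ≤ 2 a`, so
Picard–Lindelöf yields a solution on a time interval of half-length `1/2`, whatever the initial
point (`exists_local_solution`). A uniform existence time forces global existence by the uniform
time lemma for integral curves (`exists_global_solution`).
-/

set_option linter.unusedVariables false

noncomputable section

open Set Metric in
/-- The existence time `1/2` does not depend on the initial point `p`. -/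
lemma exists_local_solution {C : ℝ} {f : ℝ → ℝ} (hf1 : ContDiff ℝ 1 f)
    (hf : ∀ s, |f s| ≤ C) (p : ℝ × ℝ) :
    ∃ γ : ℝ → ℝ × ℝ, γ 0 = p ∧
      ∀ t ∈ Ioo (-(1 / 2) : ℝ) (1 / 2), HasDerivAt γ ((γ t).2, f (γ t).1) t := by
  have hC : 0 ≤ C := (abs_nonneg _).trans (hf 0)
  set F : ℝ × ℝ → ℝ × ℝ := fun q => (q.2, f q.1) with hF
  have hF1 : ContDiff ℝ 1 F := contDiff_snd.prodMk (hf1.comp contDiff_fst)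
  let a : NNReal := ⟨|p.2| + C + 1, by positivity⟩
  have ha : (a : ℝ) = |p.2| + C + 1 := rfl
  obtain ⟨K, hK⟩ := (hF1.contDiffOn (s := closedBall p a)).exists_lipschitzOnWith one_ne_zero
    (convex_closedBall p a) (isCompact_closedBall p a)
  have hPL : IsPicardLindelof (fun _ => F) (tmin := -(1 / 2)) (tmax := 1 / 2)
      ⟨0, by norm_num, by norm_num⟩ p a 0 (2 * a) K := by
    refine IsPicardLindelof.of_time_independent (fun q hq => ?_) hK ?_
    · rw [mem_closedBall, Prod.dist_eq, max_le_iff, Real.dist_eq, Real.dist_eq] at hq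
      have h2 : |q.2| ≤ |p.2| + a := by
        have := abs_sub_abs_le_abs_sub q.2 p.2
        linarith [hq.2]
      have h3 := hf q.1
      have h4 := abs_nonneg p.2
      rw [Prod.norm_def, max_le_iff]
      push_cast
      constructor
      · simp only [hF, Real.norm_eq_abs]
        linarith
      · simp only [hF, Real.norm_eq_abs]
        linarith
    · norm_num
      linarith
  obtain ⟨γ, h0, hγ⟩ := hPL.exists_eq_forall_mem_Icc_hasDerivWithinAt₀
  exact ⟨γ, h0, fun t ht =>
    (hγ t (Ioo_subset_Icc_self ht)).hasDerivAt (Icc_mem_nhds ht.1 ht.2)⟩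

open scoped Manifold in
lemma exists_global_solution {C : ℝ} {f : ℝ → ℝ} (hf1 : ContDiff ℝ 1 f)
    (hf : ∀ s, |f s| ≤ C) (p : ℝ × ℝ) :
    ∃ γ : ℝ → ℝ × ℝ, γ 0 = p ∧ ∀ t, HasDerivAt γ ((γ t).2, f (γ t).1) t := by
  have hF1 : ContDiff ℝ 1 (fun q : ℝ × ℝ => (q.2, f q.1)) :=
    contDiff_snd.prodMk (hf1.comp contDiff_fst)
  obtain ⟨γ, h0, hγ⟩ := exists_isMIntegralCurve_of_isMIntegralCurveOn
    (I := 𝓘(ℝ, ℝ × ℝ)) (M := ℝ × ℝ) (v := fun q : ℝ × ℝ => (q.2, f q.1))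
    (contMDiff_vectorSpace_iff_contDiff.2 hF1) (ε := 1 / 2) (by norm_num)
    (fun x => by
      obtain ⟨γ, h0, hγ⟩ := exists_local_solution hf1 hf x
      exact ⟨γ, h0, fun t ht => (hγ t ht).hasFDerivAt.hasMFDerivAt.hasMFDerivWithinAt⟩) p
  refine ⟨γ, h0, fun t => ?_⟩
  rw [hasDerivAt_iff_hasFDerivAt]
  exact hasMFDerivAt_iff_hasFDerivAt.1 (hγ t)

/-- global existence for ü = f(u) when f is C¹ and |f(s)| ≤ C/cosh(s):
every initial condition extends to a solution defined on all of ℝ. -/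
theorem stmt9 (C : ℝ) (hC : 0 ≤ C) (f : ℝ → ℝ) (hf1 : ContDiff ℝ 1 f)
    (hf : ∀ s : ℝ, |f s| ≤ C / Real.cosh s) (t₀ u₀ v₀ : ℝ) :
    ∃ u : ℝ → ℝ, ContDiff ℝ 2 u ∧ u t₀ = u₀ ∧ deriv u t₀ = v₀ ∧
      ∀ t : ℝ, iteratedDeriv 2 u t = f (u t) := by
  have hfC : ∀ s, |f s| ≤ C := fun s =>
    (hf s).trans (div_le_self hC (Real.one_le_cosh s))
  obtain ⟨γ, h0, hγ⟩ := exists_global_solution hf1 hfC (u₀, v₀)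
  have hγ1 : ∀ t, HasDerivAt (fun t => (γ (t - t₀)).1) (γ (t - t₀)).2 t := fun t =>
    HasDerivAt.comp_sub_const t t₀ (f := fun s => (γ s).1)
      ((hasFDerivAt_fst (𝕜 := ℝ) (E := ℝ) (F := ℝ) (p := γ (t - t₀))).comp_hasDerivAt (t - t₀)
        (hγ (t - t₀)))
  have hγ2 : ∀ t, HasDerivAt (fun t => (γ (t - t₀)).2) (f (γ (t - t₀)).1) t := fun t =>
    HasDerivAt.comp_sub_const t t₀ (f := fun s => (γ s).2)
      ((hasFDerivAt_snd (𝕜 := ℝ) (E := ℝ) (F := ℝ) (p := γ (t - t₀))).comp_hasDerivAt (t - t₀)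
        (hγ (t - t₀)))
  have hd1 : deriv (fun t => (γ (t - t₀)).1) = fun t => (γ (t - t₀)).2 :=
    funext fun t => (hγ1 t).deriv
  have hd2 : deriv (fun t => (γ (t - t₀)).2) = fun t => f (γ (t - t₀)).1 :=
    funext fun t => (hγ2 t).deriv
  have hcont : Continuous fun t => (γ (t - t₀)).1 :=
    continuous_iff_continuousAt.2 fun t => (hγ1 t).continuousAt
  refine ⟨fun t => (γ (t - t₀)).1, ?_, by simp [h0], by simp [hd1, h0], fun t => ?_⟩
  · rw [show (2 : WithTop ℕ∞) = 1 + 1 from one_add_one_eq_two.symm, contDiff_succ_iff_deriv]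
    refine ⟨fun t => (hγ1 t).differentiableAt, by simp, ?_⟩
    rw [hd1, contDiff_one_iff_deriv, hd2]
    exact ⟨fun t => (hγ2 t).differentiableAt, hf1.continuous.comp hcont⟩
  · rw [iteratedDeriv_succ, iteratedDeriv_one, hd1, hd2]
end
end

section
/- Fix t ∈ ℝ. On U = (−1,1) × ℝ ⊆ ℝ² take A(x,y) = x/(1−x²), B = D = 0, and C(x,y) = x(1−x²) + (t/4)(1−x²)² (for t = 0 this ∇ is the Levi-Civita connection of the round sphere metric written in the Darboux coordinates x = −cos θ, y = φ on the sphere minus its poles). Then: (a) K(x,y) = (3/2)t·x; (b) ρ₁ = 0 and ρ₂ = (t/2)(1 − 3x²); (c) E₁(K) = E₂(K) = E₃(K) = E₄(K) = 0, so ∇ is critical symplectic; (d) the symmetrized Ricci-derivative component 2(∇_y Ric)_{xy} + (∇_x Ric)_{yy} equals −t identically, so ∇ is preferred if and only if t = 0; and (e) ∫₀^{2π}∫_{−1}^{1} K² dx dy = 3π t². In particular, for t ≠ 0 this gives a critical symplectic connection that is neither moment constant nor preferred and is not an absolute minimizer of the squared L²-norm of K. -/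
/-!
All coefficients depend on `x` alone, so every `y`-derivative vanishes and the invariants reduce to
ordinary derivatives of `C10 t` and of the product `A10 * C10 t`. On the strip the pole of `A10`
cancels in that product, `A C = x² + (t/4) x (1 - x²)`, so with `C` polynomial
`K = ∂ₓ³ C + 3 ∂ₓ² (A C) = (3/2) t x` and `ρ₂ = -2 (∂ₓ² C + 3 ∂ₓ (A C)) = (t/2) (1 - 3x²)`.
Since `K` is affine in `x` and `A`, `C` do not depend on `y`, all four criticality equations hold.
The Ricci tensor is diagonal, with `R₁₁ = 1/(1 - x²)` and `R₂₂ = (1 - x²)(1 - t x/2)`; of the four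
symmetrized components of its covariant derivative only the `xyy` one, equal to `-t`, can be nonzero.
All derivatives are computed from formulas valid on the open interval `(-1, 1)` only (`px_of_eqOn`).
-/

set_option linter.unusedVariables false

noncomputable section

/-- The function A for the spherical example. -/
def A10 : ℝ → ℝ → ℝ := fun x _ => x / (1 - x ^ 2)

/-- The function C for the spherical example. -/
def C10 (t : ℝ) : ℝ → ℝ → ℝ := fun x _ =>
  x * (1 - x ^ 2) + (t / 4) * (1 - x ^ 2) ^ 2

/-- The zero function of two variables. -/
def Z2 : ℝ → ℝ → ℝ := fun _ _ => 0

/-- The strip (−1,1) × ℝ, i.e. the sphere minus its poles in Darboux coordinates. -/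
def U10 : Set (ℝ × ℝ) := Set.Ioo (-1 : ℝ) 1 ×ˢ (Set.univ : Set ℝ)

/-- A partial derivative in `x` may be computed from any formula valid on the strip. -/
lemma px_of_eqOn {f : ℝ → ℝ → ℝ} {g : ℝ → ℝ} {g' x : ℝ}
    (h : ∀ s ∈ Set.Ioo (-1 : ℝ) 1, ∀ y, f s y = g s) (hx : x ∈ Set.Ioo (-1 : ℝ) 1)
    (hg : HasDerivAt g g' x) (y : ℝ) : px f x y = g' := by
  have he : (fun s => f s y) =ᶠ[nhds x] g := by
    filter_upwards [isOpen_Ioo.mem_nhds hx] with s hs using h s hs y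
  exact (hg.congr_of_eventuallyEq he).deriv

lemma py_of_eqOn {f : ℝ → ℝ → ℝ} {g : ℝ → ℝ} {x : ℝ}
    (h : ∀ s ∈ Set.Ioo (-1 : ℝ) 1, ∀ y, f s y = g s) (hx : x ∈ Set.Ioo (-1 : ℝ) 1)
    (y : ℝ) : py f x y = 0 := by
  simp [py, h x hx]

lemma px_const_right (g : ℝ → ℝ) : px (fun x _ => g x) = fun x _ => deriv g x := rfl

lemma py_const_right (g : ℝ → ℝ) : py (fun x _ => g x) = fun _ _ => 0 := by
  funext x y; simp [py]

lemma px_zero : px (fun _ _ => 0) = fun _ _ => 0 := by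
  funext x y; simp [px]

lemma one_sub_sq_ne_zero {x : ℝ} (hx : x ∈ Set.Ioo (-1 : ℝ) 1) : 1 - x ^ 2 ≠ 0 := by
  have := mul_pos (sub_pos.2 hx.2) (neg_lt_iff_pos_add.1 hx.1)
  nlinarith

/-! ### Derivatives of the coefficients -/

/-- Derivative of a polynomial of degree at most four, in coefficient form. -/
lemma hasDerivAt_quartic (a b c d e x : ℝ) :
    HasDerivAt (fun s : ℝ => a + b * s + c * s ^ 2 + d * s ^ 3 + e * s ^ 4)
      (b + 2 * c * x + 3 * d * x ^ 2 + 4 * e * x ^ 3) x := by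
  have h := ((((hasDerivAt_const x a).add ((hasDerivAt_id x).const_mul b)).add
    ((hasDerivAt_pow 2 x).const_mul c)).add ((hasDerivAt_pow 3 x).const_mul d)).add
    ((hasDerivAt_pow 4 x).const_mul e)
  refine h.congr_deriv ?_
  norm_num
  ring

/-- `px_of_eqOn` for a function which is polynomial in `x` on the strip. -/
lemma px_quartic {f : ℝ → ℝ → ℝ} (a b c d e : ℝ)
    (h : ∀ s ∈ Set.Ioo (-1 : ℝ) 1, ∀ y, f s y = a + b * s + c * s ^ 2 + d * s ^ 3 + e * s ^ 4) :
    ∀ s ∈ Set.Ioo (-1 : ℝ) 1, ∀ y, px f s y =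
      b + 2 * c * s + 3 * d * s ^ 2 + 4 * e * s ^ 3 + 0 * s ^ 4 := by
  intro s hs y
  rw [px_of_eqOn h hs (hasDerivAt_quartic a b c d e s)]
  ring

lemma px_C10 (t : ℝ) : ∀ s ∈ Set.Ioo (-1 : ℝ) 1, ∀ y, px (C10 t) s y =
    1 + 2 * (-t / 2) * s + 3 * (-1) * s ^ 2 + 4 * (t / 4) * s ^ 3 + 0 * s ^ 4 :=
  px_quartic (t / 4) 1 (-t / 2) (-1) (t / 4) fun s _ y => by simp only [C10]; ring

/-- The product `A C`, in which the pole of `A` cancels. -/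
lemma A10_mul_C10 (t : ℝ) : ∀ s ∈ Set.Ioo (-1 : ℝ) 1, ∀ y, A10 s y * C10 t s y - 0 ^ 2 =
    0 + t / 4 * s + 1 * s ^ 2 + (-t / 4) * s ^ 3 + 0 * s ^ 4 := by
  intro s hs y
  have := one_sub_sq_ne_zero hs
  simp only [A10, C10]
  field_simp
  ring

lemma px_A10 {x : ℝ} (hx : x ∈ Set.Ioo (-1 : ℝ) 1) (y : ℝ) :
    px A10 x y = (1 + x ^ 2) / (1 - x ^ 2) ^ 2 := by
  have hd : HasDerivAt (fun s : ℝ => 1 - s ^ 2) (-(2 * x)) x := by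
    simpa using (hasDerivAt_pow 2 x).const_sub 1
  have h := (hasDerivAt_id x).div hd (one_sub_sq_ne_zero hx)
  refine px_of_eqOn (g := id / fun s => 1 - s ^ 2) (fun _ _ _ => rfl) hx (h.congr_deriv ?_) y
  simp only [id]
  ring

/-! ### The moment map and the curvature one-form -/

lemma Kmap_reduce (a c : ℝ → ℝ) :
    Kmap (fun x _ => a x) (fun _ _ => 0) (fun x _ => c x) (fun _ _ => 0) = fun x y =>
      px (px (px (fun x _ => c x))) x y + 3 * px (px (fun x _ => a x * c x - 0 ^ 2)) x y := by
  funext x y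
  simp only [Kmap, px_const_right, py_const_right, mul_zero, zero_mul, sub_zero, add_zero,
    zero_add, deriv_const']

lemma Kmap_eq (t : ℝ) : ∀ s ∈ Set.Ioo (-1 : ℝ) 1, ∀ y,
    Kmap A10 Z2 (C10 t) Z2 s y = 3 / 2 * t * s := by
  intro s hs y
  refine (congrFun₂ (Kmap_reduce (fun x => A10 x 0) (fun x => C10 t x 0)) s y).trans ?_
  change px (px (px (C10 t))) s y + 3 * px (px (fun x y => A10 x y * C10 t x y - 0 ^ 2)) s y = _
  rw [px_quartic _ _ _ _ _ (px_quartic _ _ _ _ _ (px_C10 t)) s hs,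
    px_quartic _ _ _ _ _ (px_quartic _ _ _ _ _ (A10_mul_C10 t)) s hs]
  ring

lemma rho1_eq (t x y : ℝ) : rho1 A10 Z2 (C10 t) Z2 x y = 0 := by
  have h (a c : ℝ → ℝ) :
      rho1 (fun x _ => a x) (fun _ _ => 0) (fun x _ => c x) (fun _ _ => 0) x y = 0 := by
    simp only [rho1, px_const_right, py_const_right, mul_zero, zero_mul, sub_zero, add_zero,
      deriv_const']
  exact h (fun x => A10 x 0) (fun x => C10 t x 0)

lemma rho2_eq (t : ℝ) {x : ℝ} (hx : x ∈ Set.Ioo (-1 : ℝ) 1) (y : ℝ) :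
    rho2 A10 Z2 (C10 t) Z2 x y = t / 2 * (1 - 3 * x ^ 2) := by
  have h (a c : ℝ → ℝ) :
      rho2 (fun x _ => a x) (fun _ _ => 0) (fun x _ => c x) (fun _ _ => 0) x y =
        -2 * (px (px (fun x _ => c x)) x y + 3 * px (fun x _ => a x * c x - 0 ^ 2) x y) := by
    simp only [rho2, px_const_right, py_const_right, mul_zero, zero_mul, sub_zero, add_zero,
      zero_add, deriv_const']
  refine (h (fun x => A10 x 0) (fun x => C10 t x 0)).trans ?_
  change -2 * (px (px (C10 t)) x y + 3 * px (fun x y => A10 x y * C10 t x y - 0 ^ 2) x y) = _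
  rw [px_quartic _ _ _ _ _ (px_C10 t) x hx, px_quartic _ _ _ _ _ (A10_mul_C10 t) x hx]
  ring

/-! ### Criticality -/

lemma critical_A10_C10 (t : ℝ) : Critical A10 Z2 (C10 t) Z2 U10 := by
  rintro ⟨x, y⟩ ⟨hx, -⟩
  set K := Kmap A10 Z2 (C10 t) Z2
  have hK : ∀ s ∈ Set.Ioo (-1 : ℝ) 1, ∀ y,
      K s y = 0 + 3 / 2 * t * s + 0 * s ^ 2 + 0 * s ^ 3 + 0 * s ^ 4 := fun s hs y => by
    rw [show K s y = _ from Kmap_eq t s hs y]; ring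
  have h1 := px_quartic _ _ _ _ _ hK
  have h2 := px_quartic _ _ _ _ _ h1
  have h3 := px_quartic _ _ _ _ _ h2
  have k0 : ∀ s ∈ Set.Ioo (-1 : ℝ) 1, ∀ y, py K s y = 0 := fun s hs y => py_of_eqOn hK hs y
  have k00 : ∀ s ∈ Set.Ioo (-1 : ℝ) 1, ∀ y, py (py K) s y = 0 :=
    fun s hs y => py_of_eqOn k0 hs y
  have k000 := py_of_eqOn k00 hx y
  have k1 : ∀ s ∈ Set.Ioo (-1 : ℝ) 1, ∀ y, py (px K) s y = 0 := fun s hs y => py_of_eqOn h1 hs y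
  have k10 := py_of_eqOn k1 hx y
  have k2 := py_of_eqOn h2 hx y
  have hZ : px Z2 x y = 0 ∧ py Z2 x y = 0 := by simp [px, py, Z2]
  have hA : py A10 x y = 0 := by simp [py, A10]
  have hC : py (C10 t) x y = 0 := by simp [py, C10]
  simp only at hx
  simp [E1, E2, E3, E4, hZ, hA, hC, h3 x hx, h2 x hx, k0 x hx, k00 x hx, k000, k1 x hx, k10, k2]

/-! ### The Ricci tensor and its derivative -/

lemma R11_eq (t : ℝ) : ∀ s ∈ Set.Ioo (-1 : ℝ) 1, ∀ y,
    R11 A10 Z2 (C10 t) Z2 s y = (1 - s ^ 2)⁻¹ := by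
  intro s hs y
  have := one_sub_sq_ne_zero hs
  have hZ : py Z2 s y = 0 := by simp [py, Z2]
  simp only [R11, px_A10 hs, hZ, A10, Z2]
  field_simp
  ring

lemma R12_eq (t : ℝ) : R12 A10 Z2 (C10 t) Z2 = fun _ _ => 0 := by
  funext x y
  simp [R12, px, py, A10, Z2]

lemma R22_eq (t : ℝ) : ∀ s ∈ Set.Ioo (-1 : ℝ) 1, ∀ y, R22 A10 Z2 (C10 t) Z2 s y =
    1 + (-t / 2) * s + (-1) * s ^ 2 + t / 2 * s ^ 3 + 0 * s ^ 4 := by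
  intro s hs y
  have hZ : py Z2 s y = 0 := by simp [py, Z2]
  simp only [R22, px_C10 t s hs, hZ, Z2, A10_mul_C10 t s hs]
  ring

lemma px_R11 (t : ℝ) {x : ℝ} (hx : x ∈ Set.Ioo (-1 : ℝ) 1) (y : ℝ) :
    px (R11 A10 Z2 (C10 t) Z2) x y = 2 * x / (1 - x ^ 2) ^ 2 := by
  have hd : HasDerivAt (fun s : ℝ => 1 - s ^ 2) (-(2 * x)) x := by
    simpa using (hasDerivAt_pow 2 x).const_sub 1
  exact px_of_eqOn (R11_eq t) hx ((hd.inv (one_sub_sq_ne_zero hx)).congr_deriv (by simp)) y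

lemma sym_xyy_eq (t : ℝ) {x : ℝ} (hx : x ∈ Set.Ioo (-1 : ℝ) 1) (y : ℝ) :
    2 * nyRxy A10 Z2 (C10 t) Z2 x y + nxRyy A10 Z2 (C10 t) Z2 x y = -t := by
  have := one_sub_sq_ne_zero hx
  simp only [nyRxy, nxRyy, px_quartic _ _ _ _ _ (R22_eq t) x hx, R11_eq t x hx, R22_eq t x hx,
    R12_eq, py_const_right, A10, C10, Z2]
  field_simp
  ring

lemma preferred_iff (t : ℝ) : Preferred A10 Z2 (C10 t) Z2 U10 ↔ t = 0 := by
  constructor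
  · intro h
    have h0 : (0 : ℝ) ∈ Set.Ioo (-1 : ℝ) 1 := by norm_num
    have := (h (0, 0) ⟨h0, trivial⟩).2.2.1
    rw [sym_xyy_eq t h0] at this
    linarith
  · rintro rfl ⟨x, y⟩ ⟨hx, -⟩
    simp only at hx
    have := one_sub_sq_ne_zero hx
    refine ⟨?_, ?_, ?_, ?_⟩
    · simp only [nxRxx, px_R11 0 hx, R11_eq 0 x hx, R12_eq, A10, Z2]
      field_simp
      ring
    · simp [nxRxy, nyRxx, py_of_eqOn (R11_eq 0) hx, R12_eq, px_zero, Z2]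
    · simpa using sym_xyy_eq 0 hx y
    · simp [nyRyy, py_of_eqOn (R22_eq 0) hx, R12_eq, Z2]

/-! ### The squared norm of the moment map -/

lemma integral_Kmap_sq (t y : ℝ) :
    ∫ x in (-1 : ℝ)..1, (Kmap A10 Z2 (C10 t) Z2 x y) ^ 2 = 3 / 2 * t ^ 2 := by
  -- The formula for `K` is only known on the open interval, which suffices up to the null set `{1}`.
  have h : ∫ x in (-1 : ℝ)..1, (Kmap A10 Z2 (C10 t) Z2 x y) ^ 2
      = ∫ x in (-1 : ℝ)..1, (9 / 4 * t ^ 2) * x ^ 2 := by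
    rw [intervalIntegral.integral_of_le (by norm_num), intervalIntegral.integral_of_le (by norm_num),
      MeasureTheory.integral_Ioc_eq_integral_Ioo, MeasureTheory.integral_Ioc_eq_integral_Ioo]
    refine MeasureTheory.setIntegral_congr_fun measurableSet_Ioo fun x hx => ?_
    simp only [Kmap_eq t x hx y]
    ring
  rw [h, intervalIntegral.integral_const_mul, integral_pow]
  norm_num
  ring

/-- the rotationally symmetric family ∇(t) on the sphere minus its poles:
(a) K = (3/2)t·x; (b) ρ₁ = 0 and ρ₂ = (t/2)(1 − 3x²); (c) ∇(t) is critical symplectic;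
(d) 2(∇_y Ric)_{xy} + (∇_x Ric)_{yy} = −t, and ∇(t) is preferred iff t = 0;
(e) ∫₀^{2π}∫_{−1}^{1} K² dx dy = 3πt². -/
theorem stmt10 (t : ℝ) :
    (∀ w ∈ U10, Kmap A10 Z2 (C10 t) Z2 w.1 w.2 = (3 / 2) * t * w.1) ∧
    (∀ w ∈ U10, rho1 A10 Z2 (C10 t) Z2 w.1 w.2 = 0 ∧
      rho2 A10 Z2 (C10 t) Z2 w.1 w.2 = (t / 2) * (1 - 3 * w.1 ^ 2)) ∧
    Critical A10 Z2 (C10 t) Z2 U10 ∧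
    (∀ w ∈ U10, 2 * nyRxy A10 Z2 (C10 t) Z2 w.1 w.2
        + nxRyy A10 Z2 (C10 t) Z2 w.1 w.2 = -t) ∧
    (Preferred A10 Z2 (C10 t) Z2 U10 ↔ t = 0) ∧
    (∫ y in (0 : ℝ)..(2 * Real.pi), ∫ x in (-1 : ℝ)..(1 : ℝ),
        (Kmap A10 Z2 (C10 t) Z2 x y) ^ 2) = 3 * Real.pi * t ^ 2 := by
  refine ⟨fun w hw => Kmap_eq t w.1 hw.1 w.2, fun w hw => ⟨rho1_eq t _ _, rho2_eq t hw.1 _⟩,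
    critical_A10_C10 t, fun w hw => sym_xyy_eq t hw.1 w.2, preferred_iff t, ?_⟩
  simp only [integral_Kmap_sq, intervalIntegral.integral_const, smul_eq_mul]
  ring
end
end

section
/- Let P, Q : ℝ² → ℝ be smooth with P_y = Q_x (so that the one-form X = P dx + Q dy is closed), and set A = P²Q, B = −P³, C = Q³, D = −PQ², so that the lowered difference tensor of ∇ = ∂ + Π is X⊗X⊗X. Put m = P_x·Q_y − P_y·Q_x and W = Q²·P_x − 2PQ·P_y + P²·Q_y. Then the moment map and curvature one-form of ∇ satisfy K = 6(P·m_y − Q·m_x), ρ₁ = 12mP − 2W_x, and ρ₂ = 12mQ − 2W_y. -/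
/-!
The functions `A, B, C, D` come from the cube of a single one-form, so all the quadratic
expressions `AC - D²`, `BD - A²`, `AD - BC` vanish identically. What remains is an identity
between differential polynomials in `P` and `Q`. The lemmas below say that `px` and `py` are
commuting derivations of the ring of smooth functions; expanding with the Leibniz rule
and using the closedness relation `py P = px Q` together with `py (px f) = px (py f)` brings
both sides to polynomials in the independent partial derivatives, which agree by `ring`.
-/

set_option linter.unusedVariables false

noncomputable section

/-- m = P_x·Q_y − P_y·Q_x, the determinant of the Jacobian of (P,Q). -/
def mPQ (P Q : ℝ → ℝ → ℝ) : ℝ → ℝ → ℝ := fun x y =>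
  px P x y * py Q x y - py P x y * px Q x y

/-- W = Q²·P_x − 2PQ·P_y + P²·Q_y. -/
def WPQ (P Q : ℝ → ℝ → ℝ) : ℝ → ℝ → ℝ := fun x y =>
  Q x y ^ 2 * px P x y - 2 * P x y * Q x y * py P x y + P x y ^ 2 * py Q x y

/-- A = P²Q, so that the lowered difference tensor is X⊗X⊗X for X = Pdx + Qdy. -/
def APQ (P Q : ℝ → ℝ → ℝ) : ℝ → ℝ → ℝ := fun x y => P x y ^ 2 * Q x y

/-- B = −P³. -/
def BPQ (P : ℝ → ℝ → ℝ) : ℝ → ℝ → ℝ := fun x y => -(P x y ^ 3)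

/-- C = Q³. -/
def CPQ (Q : ℝ → ℝ → ℝ) : ℝ → ℝ → ℝ := fun x y => Q x y ^ 3

/-- D = −PQ². -/
def DPQ (P Q : ℝ → ℝ → ℝ) : ℝ → ℝ → ℝ := fun x y => -(P x y * Q x y ^ 2)

namespace Smooth2

variable {f g : ℝ → ℝ → ℝ}

lemma px_eq_fderiv (hf : Smooth2 f) (x y : ℝ) :
    px f x y = fderiv ℝ (Function.uncurry f) (x, y) (1, 0) := by
  have h := (hf.differentiable (by simp) (x, y)).hasFDerivAt
  have hl : HasDerivAt (fun s : ℝ => (s, y)) ((1 : ℝ), (0 : ℝ)) x :=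
    (hasDerivAt_id x).prodMk (hasDerivAt_const x y)
  exact (h.comp_hasDerivAt x hl).deriv

lemma py_eq_fderiv (hf : Smooth2 f) (x y : ℝ) :
    py f x y = fderiv ℝ (Function.uncurry f) (x, y) (0, 1) := by
  have h := (hf.differentiable (by simp) (x, y)).hasFDerivAt
  have hl : HasDerivAt (fun s : ℝ => (x, s)) ((0 : ℝ), (1 : ℝ)) y :=
    (hasDerivAt_const y x).prodMk (hasDerivAt_id y)
  exact (h.comp_hasDerivAt y hl).deriv

lemma uncurry_px (hf : Smooth2 f) :
    Function.uncurry (px f) = fun p => fderiv ℝ (Function.uncurry f) p (1, 0) := by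
  ext ⟨x, y⟩
  exact hf.px_eq_fderiv x y

lemma uncurry_py (hf : Smooth2 f) :
    Function.uncurry (py f) = fun p => fderiv ℝ (Function.uncurry f) p (0, 1) := by
  ext ⟨x, y⟩
  exact hf.py_eq_fderiv x y

protected lemma px (hf : Smooth2 f) : Smooth2 (px f) := by
  unfold Smooth2
  rw [hf.uncurry_px]
  exact (ContDiff.fderiv_right hf (by simp)).clm_apply contDiff_const

protected lemma py (hf : Smooth2 f) : Smooth2 (py f) := by
  unfold Smooth2
  rw [hf.uncurry_py]
  exact (ContDiff.fderiv_right hf (by simp)).clm_apply contDiff_const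

protected lemma add (hf : Smooth2 f) (hg : Smooth2 g) : Smooth2 (f + g) :=
  ContDiff.add hf hg

protected lemma sub (hf : Smooth2 f) (hg : Smooth2 g) : Smooth2 (f - g) :=
  ContDiff.sub hf hg

protected lemma mul (hf : Smooth2 f) (hg : Smooth2 g) : Smooth2 (f * g) :=
  ContDiff.mul hf hg

lemma differentiableAt_left (hf : Smooth2 f) (x y : ℝ) :
    DifferentiableAt ℝ (fun s => f s y) x :=
  DifferentiableAt.comp (g := Function.uncurry f) (f := fun s => (s, y)) x
    (hf.differentiable (by simp) (x, y))
    (differentiableAt_id.prodMk (differentiableAt_const y))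

lemma differentiableAt_right (hf : Smooth2 f) (x y : ℝ) :
    DifferentiableAt ℝ (fun s => f x s) y :=
  DifferentiableAt.comp (g := Function.uncurry f) (f := fun s => (x, s)) y
    (hf.differentiable (by simp) (x, y))
    ((differentiableAt_const x).prodMk differentiableAt_id)

lemma px_add (hf : Smooth2 f) (hg : Smooth2 g) : px (f + g) = px f + px g := by
  ext x y
  exact deriv_add (hf.differentiableAt_left x y) (hg.differentiableAt_left x y)

lemma py_add (hf : Smooth2 f) (hg : Smooth2 g) : py (f + g) = py f + py g := by
  ext x y
  exact deriv_add (hf.differentiableAt_right x y) (hg.differentiableAt_right x y)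

lemma px_sub (hf : Smooth2 f) (hg : Smooth2 g) : px (f - g) = px f - px g := by
  ext x y
  exact deriv_sub (hf.differentiableAt_left x y) (hg.differentiableAt_left x y)

lemma py_sub (hf : Smooth2 f) (hg : Smooth2 g) : py (f - g) = py f - py g := by
  ext x y
  exact deriv_sub (hf.differentiableAt_right x y) (hg.differentiableAt_right x y)

lemma px_mul (hf : Smooth2 f) (hg : Smooth2 g) :
    px (f * g) = px f * g + f * px g := by
  ext x y
  exact deriv_mul (hf.differentiableAt_left x y) (hg.differentiableAt_left x y)

lemma py_mul (hf : Smooth2 f) (hg : Smooth2 g) :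
    py (f * g) = py f * g + f * py g := by
  ext x y
  exact deriv_mul (hf.differentiableAt_right x y) (hg.differentiableAt_right x y)

/-- Schwarz's theorem: mixed partial derivatives of a smooth function agree. -/
lemma py_px (hf : Smooth2 f) : py (px f) = px (py f) := by
  ext x y
  have hd : DifferentiableAt ℝ (fderiv ℝ (Function.uncurry f)) (x, y) :=
    (ContDiff.fderiv_right (m := 1) hf (by norm_cast)).differentiable (by simp) (x, y)
  have hs : IsSymmSndFDerivAt ℝ (Function.uncurry f) (x, y) :=
    (ContDiff.contDiffAt hf).isSymmSndFDerivAt (by simp; norm_cast)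
  rw [hf.px.py_eq_fderiv, hf.py.px_eq_fderiv, hf.uncurry_px, hf.uncurry_py,
    fderiv_clm_apply hd (differentiableAt_const _), fderiv_clm_apply hd (differentiableAt_const _)]
  simpa using hs (0, 1) (1, 0)

end Smooth2

lemma px_neg (f : ℝ → ℝ → ℝ) : px (-f) = -px f := by
  ext x y
  exact deriv.neg

lemma py_neg (f : ℝ → ℝ → ℝ) : py (-f) = -py f := by
  ext x y
  exact deriv.neg

lemma px_zero_s11 : px 0 = 0 := by
  ext x y
  exact deriv_const x (0 : ℝ)

lemma py_zero : py 0 = 0 := by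
  ext x y
  exact deriv_const y (0 : ℝ)

/-- for a connection whose lowered difference tensor is the cube of the
closed one-form X = Pdx + Qdy, K = 6(P·m_y − Q·m_x), ρ₁ = 12mP − 2W_x,
ρ₂ = 12mQ − 2W_y. -/
theorem stmt11 (P Q : ℝ → ℝ → ℝ)
    (hP : Smooth2 P) (hQ : Smooth2 Q)
    (hclosed : ∀ x y : ℝ, py P x y = px Q x y) :
    ∀ x y : ℝ,
      Kmap (APQ P Q) (BPQ P) (CPQ Q) (DPQ P Q) x y
          = 6 * (P x y * py (mPQ P Q) x y - Q x y * px (mPQ P Q) x y) ∧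
      rho1 (APQ P Q) (BPQ P) (CPQ Q) (DPQ P Q) x y
          = 12 * mPQ P Q x y * P x y - 2 * px (WPQ P Q) x y ∧
      rho2 (APQ P Q) (BPQ P) (CPQ Q) (DPQ P Q) x y
          = 12 * mPQ P Q x y * Q x y - 2 * py (WPQ P Q) x y := by
  have hc : py P = px Q := by
    ext x y
    exact hclosed x y
  -- Products are written out without powers or numerals, so that the Leibniz rule is the
  -- only differentiation rule needed.
  have hA : APQ P Q = P * P * Q := by
    ext x y
    simp only [APQ, Pi.mul_apply]
    ring
  have hB : BPQ P = -(P * P * P) := by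
    ext x y
    simp only [BPQ, Pi.mul_apply, Pi.neg_apply]
    ring
  have hC : CPQ Q = Q * Q * Q := by
    ext x y
    simp only [CPQ, Pi.mul_apply]
    ring
  have hD : DPQ P Q = -(P * Q * Q) := by
    ext x y
    simp only [DPQ, Pi.mul_apply, Pi.neg_apply]
    ring
  have hm : mPQ P Q = px P * py Q - px Q * px Q := by
    ext x y
    simp only [mPQ, hc, Pi.mul_apply, Pi.sub_apply]
  have hW : WPQ P Q = Q * Q * px P - (P * Q * px Q + P * Q * px Q) + P * P * py Q := by
    ext x y
    simp only [WPQ, hc, Pi.mul_apply, Pi.sub_apply, Pi.add_apply]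
    ring
  -- The quadratic expressions in the difference tensor vanish identically.
  have hAD : (fun x y => APQ P Q x y * DPQ P Q x y - BPQ P x y * CPQ Q x y) = 0 := by
    ext x y
    simp only [APQ, BPQ, CPQ, DPQ, Pi.zero_apply]
    ring
  have hAC : (fun x y => APQ P Q x y * CPQ Q x y - DPQ P Q x y ^ 2) = 0 := by
    ext x y
    simp only [APQ, CPQ, DPQ, Pi.zero_apply]
    ring
  have hAB : (fun x y => APQ P Q x y ^ 2 - BPQ P x y * DPQ P Q x y) = 0 := by
    ext x y
    simp only [APQ, BPQ, DPQ, Pi.zero_apply]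
    ring
  have hBA : (fun x y => BPQ P x y * DPQ P Q x y - APQ P Q x y ^ 2) = 0 := by
    ext x y
    simp only [APQ, BPQ, DPQ, Pi.zero_apply]
    ring
  intro x y
  -- The discharge depth allows for the nested smoothness side goals of iterated Leibniz rules.
  refine ⟨?_, ?_, ?_⟩
  · simp only [Kmap, hAD, hAC, hBA]
    simp (maxDischargeDepth := 12) only [hA, hB, hC, hD, hm, px_zero_s11, py_zero, px_neg, py_neg,
      Smooth2.px_mul, Smooth2.py_mul,
      Smooth2.px_add, Smooth2.py_add, Smooth2.px_sub, Smooth2.py_sub, Smooth2.py_px, hc, hP, hQ,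
      Smooth2.px, Smooth2.py, Smooth2.mul, Smooth2.add, Pi.mul_apply, Pi.add_apply,
      Pi.neg_apply, Pi.sub_apply, Pi.zero_apply]
    ring
  · simp only [rho1, hAD, hAB]
    simp (maxDischargeDepth := 12) only [hA, hB, hC, hD, hm, hW, px_zero_s11, py_zero, px_neg, py_neg,
      Smooth2.px_mul,
      Smooth2.py_mul, Smooth2.px_add, Smooth2.py_add, Smooth2.px_sub,
      Smooth2.py_px, hc, hP, hQ, Smooth2.px, Smooth2.py, Smooth2.mul, Smooth2.add, Smooth2.sub,
      Pi.mul_apply, Pi.add_apply, Pi.neg_apply, Pi.sub_apply, Pi.zero_apply]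
    ring
  · simp only [rho2, hAD, hAC]
    simp (maxDischargeDepth := 12) only [hA, hB, hC, hD, hm, hW, px_zero_s11, py_zero, px_neg, py_neg,
      Smooth2.px_mul,
      Smooth2.py_mul, Smooth2.px_add, Smooth2.py_add, Smooth2.py_sub,
      Smooth2.py_px, hc, hP, hQ, Smooth2.px, Smooth2.py, Smooth2.mul, Smooth2.add, Smooth2.sub,
      Pi.mul_apply, Pi.add_apply, Pi.neg_apply, Pi.sub_apply, Pi.zero_apply]
    ring
end
end

section
/- If f : ℝ² → ℝ is twice continuously differentiable and homogeneous of degree two in the sense that x·f_x + y·f_y = 2f everywhere on ℝ², then U(f) = 2f·Hs(f) everywhere on ℝ². -/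
/-!
Differentiating Euler's relation `x f_x + y f_y = 2 f` in each variable gives, by the symmetry
of second derivatives, `f_x = x f_xx + y f_xy` and `f_y = x f_xy + y f_yy`. Substituting these
into `U(f)` and into `2 f = x f_x + y f_y` turns the claim into a polynomial identity.
-/

set_option linter.unusedVariables false

noncomputable section

/-- The Hessian determinant Hs(f) = f_{xx}f_{yy} − f_{xy}². -/
def Hs (f : ℝ → ℝ → ℝ) : ℝ → ℝ → ℝ := fun x y =>
  px (px f) x y * py (py f) x y - (py (px f) x y) ^ 2

/-- U(f) = f_x²·f_{yy} − 2f_x·f_y·f_{xy} + f_y²·f_{xx}, the contraction of the adjugate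
of the Hessian of f with df⊗df. -/
def Uop (f : ℝ → ℝ → ℝ) : ℝ → ℝ → ℝ := fun x y =>
  (px f x y) ^ 2 * py (py f) x y - 2 * px f x y * py f x y * py (px f) x y
    + (py f x y) ^ 2 * px (px f) x y

/-- A = f_x²·f_y, so that the lowered difference tensor is df⊗df⊗df. -/
def Af (f : ℝ → ℝ → ℝ) : ℝ → ℝ → ℝ := fun x y => (px f x y) ^ 2 * py f x y

/-- B = −f_x³. -/
def Bf (f : ℝ → ℝ → ℝ) : ℝ → ℝ → ℝ := fun x y => -((px f x y) ^ 3)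

/-- C = f_y³. -/
def Cf (f : ℝ → ℝ → ℝ) : ℝ → ℝ → ℝ := fun x y => (py f x y) ^ 3

/-- D = −f_x·f_y². -/
def Df (f : ℝ → ℝ → ℝ) : ℝ → ℝ → ℝ := fun x y => -(px f x y * (py f x y) ^ 2)

lemma hasDerivAt_fst {g : ℝ → ℝ → ℝ} {x y : ℝ}
    (hg : DifferentiableAt ℝ (Function.uncurry g) (x, y)) :
    HasDerivAt (fun s => g s y) (fderiv ℝ (Function.uncurry g) (x, y) (1, 0)) x := by
  have h : HasFDerivAt (Function.uncurry g) (fderiv ℝ (Function.uncurry g) (x, y)) (x, y) :=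
    hg.hasFDerivAt
  exact HasFDerivAt.comp_hasDerivAt (l := Function.uncurry g) x h
    ((hasDerivAt_id x).prodMk (hasDerivAt_const x y))

lemma hasDerivAt_snd {g : ℝ → ℝ → ℝ} {x y : ℝ}
    (hg : DifferentiableAt ℝ (Function.uncurry g) (x, y)) :
    HasDerivAt (fun s => g x s) (fderiv ℝ (Function.uncurry g) (x, y) (0, 1)) y := by
  have h : HasFDerivAt (Function.uncurry g) (fderiv ℝ (Function.uncurry g) (x, y)) (x, y) :=
    hg.hasFDerivAt
  exact HasFDerivAt.comp_hasDerivAt (l := Function.uncurry g) y h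
    ((hasDerivAt_const y x).prodMk (hasDerivAt_id y))

lemma uncurry_px {g : ℝ → ℝ → ℝ} (hg : Differentiable ℝ (Function.uncurry g)) :
    Function.uncurry (px g) = fun p => fderiv ℝ (Function.uncurry g) p (1, 0) := by
  ext ⟨x, y⟩
  exact (hasDerivAt_fst (hg (x, y))).deriv

lemma uncurry_py {g : ℝ → ℝ → ℝ} (hg : Differentiable ℝ (Function.uncurry g)) :
    Function.uncurry (py g) = fun p => fderiv ℝ (Function.uncurry g) p (0, 1) := by
  ext ⟨x, y⟩
  exact (hasDerivAt_snd (hg (x, y))).deriv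

lemma hasDerivAt_px {g : ℝ → ℝ → ℝ} (hg : Differentiable ℝ (Function.uncurry g)) (x y : ℝ) :
    HasDerivAt (fun s => g s y) (px g x y) x :=
  (hasDerivAt_fst (hg (x, y))).differentiableAt.hasDerivAt

lemma hasDerivAt_py {g : ℝ → ℝ → ℝ} (hg : Differentiable ℝ (Function.uncurry g)) (x y : ℝ) :
    HasDerivAt (fun s => g x s) (py g x y) y :=
  (hasDerivAt_snd (hg (x, y))).differentiableAt.hasDerivAt

/-- if f is C² and homogeneous of degree two (x·f_x + y·f_y = 2f),
then U(f) = 2f·Hs(f). -/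
theorem stmt14 (f : ℝ → ℝ → ℝ) (hf : ContDiff ℝ 2 (Function.uncurry f))
    (hhom : ∀ x y : ℝ, x * px f x y + y * py f x y = 2 * f x y) :
    ∀ x y : ℝ, Uop f x y = 2 * f x y * Hs f x y := by
  have hd : Differentiable ℝ (Function.uncurry f) := hf.differentiable (by norm_num)
  have hd2 : Differentiable ℝ (fderiv ℝ (Function.uncurry f)) :=
    (hf.fderiv_right (m := 1) (by norm_num)).differentiable (by norm_num)
  have hpx : Differentiable ℝ (Function.uncurry (px f)) := by
    rw [uncurry_px hd]
    exact hd2.clm_apply (differentiable_const _)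
  have hpy : Differentiable ℝ (Function.uncurry (py f)) := by
    rw [uncurry_py hd]
    exact hd2.clm_apply (differentiable_const _)
  intro x y
  have hsymm : px (py f) x y = py (px f) x y := by
    have h1 := congrFun (uncurry_px hpy) (x, y)
    have h2 := congrFun (uncurry_py hpx) (x, y)
    rw [uncurry_py hd, fderiv_clm_apply (hd2 _) (differentiableAt_const _)] at h1
    rw [uncurry_px hd, fderiv_clm_apply (hd2 _) (differentiableAt_const _)] at h2
    simp only [Function.uncurry_apply_pair] at h1 h2
    rw [h1, h2]
    simpa using (hf.contDiffAt (x := (x, y))).isSymmSndFDerivAt (by simp) (1, 0) (0, 1)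
  have hX : px f x y = x * px (px f) x y + y * py (px f) x y := by
    have h1 := ((hasDerivAt_id x).mul (hasDerivAt_px hpx x y)).add
      ((hasDerivAt_px hpy x y).const_mul y)
    have h2 := (hasDerivAt_px hd x y).const_mul 2
    have h3 := (h1.congr_of_eventuallyEq
      (Filter.Eventually.of_forall fun s => (hhom s y).symm)).unique h2
    simp only [id, hsymm] at h3
    linarith
  have hY : py f x y = x * py (px f) x y + y * py (py f) x y := by
    have h1 := ((hasDerivAt_py hpx x y).const_mul x).add
      ((hasDerivAt_id y).mul (hasDerivAt_py hpy x y))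
    have h2 := (hasDerivAt_py hd x y).const_mul 2
    have h3 := (h1.congr_of_eventuallyEq
      (Filter.Eventually.of_forall fun s => (hhom x s).symm)).unique h2
    simp only [id] at h3
    linarith
  rw [← hhom x y]
  unfold Uop Hs
  rw [hX, hY]
  ring
end
end

section
/- Let σ^k_{ij} (i, j, k ∈ {1,2}) be real numbers with σ^k_{ij} = σ^k_{ji} for all i,j,k and Σ_p σ^p_{ip} = 0 for each i, and let Z = (Z₁, Z₂) ∈ ℝ² be nonzero and satisfy Σ_p Z_p·Z_i·σ^p_{jk} − Σ_p Z_p·Z_j·σ^p_{ik} = 0 for all i, j, k ∈ {1,2}. Then there exists A = (A¹, A²) ∈ ℝ² such that σ^k_{ij} = Z_i·Z_j·A^k − (1/3)·(Σ_p Z_p·A^p)·(Z_i·δ^k_j + Z_j·δ^k_i) for all i, j, k, where δ^k_i is the Kronecker delta. -/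
/-!
A symmetric trace-free `σ` in dimension 2 has four free components
`a = σ^0_{00}`, `b = σ^1_{00}`, `c = σ^0_{01}`, `d = σ^0_{11}`, with `σ^1_{01} = -a` and
`σ^1_{11} = -c`. The kernel condition says that `Z_p σ^p_{jk} = t Z_j Z_k` for some scalar `t`;
contracting the desired formula with `Z_k` forces `Z_p A^p = 3 t`. If `Z_0 ≠ 0`, the components
`σ^k_{00}` then determine `A`, and the kernel condition gives the remaining components
(`exists_symbol_preimage`). The case `Z_1 ≠ 0` is the same with the two indices exchanged.
-/

noncomputable section

open scoped BigOperators

/-- The statement in components, for `Z = (u, v)` with `u ≠ 0`: the hypotheses are the two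
independent kernel equations, the conclusion lists all six components of `σ`. -/
lemma exists_symbol_preimage (u v a b c d : ℝ) (hu : u ≠ 0)
    (h₁ : u * (u * c - v * a) = v * (u * a + v * b))
    (h₂ : u * (u * d - v * c) = v * (u * c - v * a)) :
    ∃ x y : ℝ,
      a = u * u * x - 2 / 3 * (u * x + v * y) * u ∧
      b = u * u * y ∧
      c = u * v * x - 1 / 3 * (u * x + v * y) * v ∧
      -a = u * v * y - 1 / 3 * (u * x + v * y) * u ∧
      d = v * v * x ∧
      -c = v * v * y - 2 / 3 * (u * x + v * y) * v := by
  have hc : c = (2 * u * v * a + v ^ 2 * b) / u ^ 2 := by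
    field_simp
    linarith
  have hd : d = (2 * u * v * c - v ^ 2 * a) / u ^ 2 := by
    field_simp
    linarith
  subst hd
  subst hc
  -- `x = (a + 2 t u) / u ^ 2`, where `t = (u * a + v * b) / u ^ 2`.
  refine ⟨(3 * u * a + 2 * v * b) / u ^ 3, b / u ^ 2, ?_, ?_, ?_, ?_, ?_, ?_⟩ <;>
    field_simp <;> ring

/-- principal symbol computation for the ellipticity of the projective
deformation complex in dimension 2. Here `σ i j k` denotes σ^k_{ij} (symmetric and
trace-free in the sense Σ_p σ^p_{ip} = 0), and `Z ≠ 0` is a covector with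
Z_p Z_{[i} σ_{j]k}{}^p = 0. Then σ is in the image of the symbol of the first operator:
σ^k_{ij} = Z_i Z_j A^k − (1/3)(Σ_p Z_p A^p)(Z_i δ^k_j + Z_j δ^k_i) for some A. -/
theorem stmt16 (σ : Fin 2 → Fin 2 → Fin 2 → ℝ)
    (hsym : ∀ i j k : Fin 2, σ i j k = σ j i k)
    (htrace : ∀ i : Fin 2, ∑ p : Fin 2, σ i p p = 0)
    (Z : Fin 2 → ℝ) (hZ : Z ≠ 0)
    (hker : ∀ i j k : Fin 2,
      Z i * (∑ p : Fin 2, Z p * σ j k p) - Z j * (∑ p : Fin 2, Z p * σ i k p) = 0) :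
    ∃ A : Fin 2 → ℝ, ∀ i j k : Fin 2,
      σ i j k = Z i * Z j * A k
        - (1 / 3) * (∑ p : Fin 2, Z p * A p)
            * (Z i * (if j = k then (1 : ℝ) else 0)
              + Z j * (if i = k then (1 : ℝ) else 0)) := by
  have ht0 := htrace 0
  have ht1 := htrace 1
  have hs := hsym 1 0
  have hk0 := hker 0 1 0
  have hk1 := hker 0 1 1
  simp only [Fin.sum_univ_two, hs] at ht0 ht1 hk0 hk1
  have e0 : σ 0 1 1 = -σ 0 0 0 := by linarith
  have e1 : σ 1 1 1 = -σ 0 1 0 := by linarith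
  rw [e0] at hk0 hk1
  rw [e1] at hk1
  by_cases h0 : Z 0 = 0
  · have h1 : Z 1 ≠ 0 := by
      intro h1
      apply hZ
      ext i
      fin_cases i <;> simp [h0, h1]
    obtain ⟨y, x, q1, q2, q3, q4, q5, q6⟩ := exists_symbol_preimage (Z 1) (Z 0)
      (-σ 0 1 0) (σ 1 1 0) (-σ 0 0 0) (σ 0 0 1) h1 (by linarith) (by linarith)
    refine ⟨![x, y], fun i j k => ?_⟩
    fin_cases i <;> fin_cases j <;> fin_cases k <;>
      simp [Fin.sum_univ_two, hs, e0, e1] <;> linarith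
  · obtain ⟨x, y, q1, q2, q3, q4, q5, q6⟩ := exists_symbol_preimage (Z 0) (Z 1)
      (σ 0 0 0) (σ 0 0 1) (σ 0 1 0) (σ 1 1 0) h0 (by linarith) (by linarith)
    refine ⟨![x, y], fun i j k => ?_⟩
    fin_cases i <;> fin_cases j <;> fin_cases k <;>
      simp [Fin.sum_univ_two, hs, e0, e1] <;> linarith
end
end
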